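/- Let Q be a well-formed formula and let N be a Q-complete, Q-consistent extension of the implicational propositional calculus, with v_N defined by v_N(A) = 1 when QQA ∈ T(N) and v_N(A) = 0 when QA ∈ T(N). For all wfs A, B: if v_N(A) = 1 and v_N(B) = 0 then v_N(A ⊃ B) = 0. -/

import Mathlib

/-- Well-formed formulas of the implicational propositional calculus:
propositional variables (indexed by ℕ, so the set of wfs is countable)
and the single connective ⊃. -/
inductive Wf where
  | var : ℕ → Wf
  | imp : Wf → Wf → Wf
deriving DecidableEq

infixr:60 " ⊃' " => Wf.imp

/-- `Deduces Γ A` : `A` is deducible from the set `Γ` of extra axioms/hypotheses,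
using the three axiom schemes of IPC (including the Peirce scheme) and modus ponens.
Theorems of IPC are `Deduces ∅ A`; for an extension `M` of IPC with extra-axiom
set `E`, `T(M)` is `Deduces E`, and deducibility from hypotheses `Γ` in `M` is
`Deduces (E ∪ Γ)`. -/
inductive Deduces : Set Wf → Wf → Prop where
  | hyp : ∀ {Γ : Set Wf} {A : Wf}, A ∈ Γ → Deduces Γ A
  | ax1 : ∀ {Γ : Set Wf} (A B : Wf), Deduces Γ (A ⊃' (B ⊃' A))
  | ax2 : ∀ {Γ : Set Wf} (A B C : Wf),
      Deduces Γ ((A ⊃' (B ⊃' C)) ⊃' ((A ⊃' B) ⊃' (A ⊃' C)))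
  | peirce : ∀ {Γ : Set Wf} (A B : Wf), Deduces Γ (((A ⊃' B) ⊃' A) ⊃' A)
  | mp : ∀ {Γ : Set Wf} {A B : Wf}, Deduces Γ (A ⊃' B) → Deduces Γ A → Deduces Γ B

/-- Let N (extra axioms E) be a Q-complete, Q-consistent extension of IPC and
let v = v_N be defined by v(A) = 1 when QQA ∈ T(N) and v(A) = 0 when
QA ∈ T(N).  If v(A) = 1 and v(B) = 0 then v(A ⊃ B) = 0. -/
theorem stmt_16 (Q : Wf) (E : Set Wf)
    (hcomplete : ∀ A : Wf, Deduces E ((A ⊃' Q) ⊃' Q) ∨ Deduces E (A ⊃' Q))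
    (hcons : ¬ Deduces E Q)
    (v : Wf → ℕ)
    (hv1 : ∀ A : Wf, Deduces E ((A ⊃' Q) ⊃' Q) → v A = 1)
    (hv0 : ∀ A : Wf, Deduces E (A ⊃' Q) → v A = 0) :
    ∀ A B : Wf, (v A = 1 ∧ v B = 0) → v (A ⊃' B) = 0 := by
  rintro A B ⟨hA, hB⟩
  have hQQA : Deduces E ((A ⊃' Q) ⊃' Q) := by
    rcases hcomplete A with h | h
    · exact h
    · have := hv0 A h
      omega
  have hQB : Deduces E (B ⊃' Q) := by
    rcases hcomplete B with h | h
    · have := hv1 B h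
      omega
    · exact h
  have h1 : Deduces E ((A ⊃' B) ⊃' (A ⊃' Q)) :=
    Deduces.mp (Deduces.ax2 A B Q) (Deduces.mp (Deduces.ax1 _ A) hQB)
  have h2 : Deduces E ((A ⊃' B) ⊃' ((A ⊃' Q) ⊃' Q)) :=
    Deduces.mp (Deduces.ax1 _ _) hQQA
  exact hv0 _ (Deduces.mp (Deduces.mp (Deduces.ax2 _ _ _) h2) h1)
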